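/- The generating function of the odd divisor function satisfies ∑_{k≥1} σ°(k)q^k + 1/24 = (1/24)(θ₃⁴(q²) + θ₂⁴(q²)), where σ°(k) is the sum of odd positive divisors of k. -/

import Mathlib

open PowerSeries Classical

/-- `θ₃(q²) = 1 + 2 ∑_{j ≥ 1} q^{j²}`. -/
noncomputable def theta3Q : PowerSeries ℚ :=
  PowerSeries.mk fun k => if k = 0 then 1 else
    if ∃ j : ℕ, 1 ≤ j ∧ j ^ 2 = k then 2 else 0

/-- `θ₂⁴(q²) = 16·q·(∑_{j ≥ 0} q^{j(j+1)})⁴`. -/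
noncomputable def theta2Q4 : PowerSeries ℚ :=
  (16 : ℚ) • (X * (PowerSeries.mk fun k =>
    if ∃ j : ℕ, j * (j + 1) = k then (1 : ℚ) else 0) ^ 4)

/-!
Write `θ = ∑ q^{x²}` and `Θ = ∑ q^{k(k+1)}`, summed over `ℤ`, so that `θ₂⁴(q²) = q Θ⁴`. Splitting
`ℤ²` by the parity of `x + y` and rotating by 45° gives `θ(q)² = θ(q²)² + q Θ(q²)²` and
`Θ(q)² = 2 θ(q²) Θ(q²)`; hence `H = θ⁴ + q Θ⁴` satisfies `H(q) = H(q²) + (3/2) q Θ(q)⁴`.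

The series `G = ∑ d q^{de - 1}` over odd `d, e > 0` satisfies `Θ G' = 4 Θ' G`: coefficientwise this
is `∑ x(xy - z²) = 0` over the odd solutions of `4xy + z² = N` with `x, y > 0`, which follows from
involutions that Heath-Brown used for sums of two squares. So `Θ⁴ = 16 G`, and
`H(q) = H(q²) + 24 q G(q)`. The odd divisor series `S` satisfies `S(q) = S(q²) + q G(q)`, so
`H - 24 S` is invariant under `q ↦ q²`, hence constant.
-/

open Filter (TendstoCofinite)

/-! ### Generating series of a statistic -/

section GeneratingSeries

variable {α β γ R : Type*}

/-- The generating series `∑ₐ c(a) q^{w(a)}` of a statistic `w` with weights `c`. It is meant for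
statistics with finite fibers (`TendstoCofinite w`): a coefficient that is an infinite sum of
weights takes the junk value `0` of `finsum`. -/
noncomputable def genSeries [Semiring R] (w : α → ℕ) (c : α → R) : R⟦X⟧ :=
  PowerSeries.mk fun n => ∑ᶠ a ∈ w ⁻¹' {n}, c a

/-- The finite set of elements at which the statistic `w` takes the value `n`. -/
noncomputable def fiber (w : α → ℕ) [TendstoCofinite w] (n : ℕ) : Finset α :=
  (TendstoCofinite.finite_preimage_singleton w n).toFinset

@[simp]
theorem mem_fiber {w : α → ℕ} [TendstoCofinite w] {n : ℕ} {a : α} : a ∈ fiber w n ↔ w a = n := by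
  simp [fiber]

theorem tendstoCofinite_add (w : α → ℕ) (v : β → ℕ) [TendstoCofinite w] [TendstoCofinite v] :
    TendstoCofinite fun p : α × β => w p.1 + v p.2 := by
  refine (Filter.tendstoCofinite_iff_finite_preimage_singleton _).mpr fun n =>
    ((TendstoCofinite.finite_preimage w (Set.finite_Iic n)).prod
      (TendstoCofinite.finite_preimage v (Set.finite_Iic n))).subset ?_
  rintro ⟨a, b⟩ rfl
  simp

section Semiring

variable [Semiring R]

theorem coeff_genSeries (w : α → ℕ) (c : α → R) (n : ℕ) :
    coeff n (genSeries w c) = ∑ᶠ a ∈ w ⁻¹' {n}, c a :=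
  coeff_mk _ _

theorem coeff_genSeries_eq_sum (w : α → ℕ) (c : α → R) (n : ℕ) {s : Finset α}
    (hs : ∀ a, a ∈ s ↔ w a = n) : coeff n (genSeries w c) = ∑ a ∈ s, c a := by
  rw [coeff_genSeries]
  exact finsum_cond_eq_sum_of_cond_iff c fun {a} _ => (hs a).symm

theorem genSeries_one_of_injective {w : α → ℕ} (hw : Function.Injective w) :
    genSeries w (1 : α → R) = PowerSeries.mk fun n => if ∃ a, w a = n then 1 else 0 := by
  ext n
  rw [coeff_mk]
  split_ifs with h
  · obtain ⟨a, rfl⟩ := h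
    rw [coeff_genSeries_eq_sum w 1 (w a) (s := {a}) (by simp [hw.eq_iff])]
    simp
  · rw [coeff_genSeries_eq_sum w 1 n (s := ∅) (by simpa using h), Finset.sum_empty]

theorem genSeries_comp_equiv (e : β ≃ α) (w : α → ℕ) (c : α → R) :
    genSeries (w ∘ e) (c ∘ e) = genSeries w c := by
  ext n
  simp only [coeff_genSeries]
  rw [← e.image_preimage (w ⁻¹' {n}), finsum_mem_image e.injective.injOn]
  rfl

theorem genSeries_eq_add_of_sum_equiv (e : α ⊕ β ≃ γ) (w : γ → ℕ) [TendstoCofinite w] (c : γ → R) :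
    genSeries w c = genSeries (fun a => w (e (.inl a))) (fun a => c (e (.inl a))) +
      genSeries (fun b => w (e (.inr b))) (fun b => c (e (.inr b))) := by
  ext n
  have hl : Function.Injective fun a => e (.inl a) := e.injective.comp Sum.inl_injective
  have hr : Function.Injective fun b => e (.inr b) := e.injective.comp Sum.inr_injective
  have hfin := TendstoCofinite.finite_preimage_singleton w n
  have hfiber : w ⁻¹' {n} = (fun a => e (.inl a)) '' {a | w (e (.inl a)) = n} ∪
      (fun b => e (.inr b)) '' {b | w (e (.inr b)) = n} := by
    ext x
    obtain ⟨y, rfl⟩ := e.surjective x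
    cases y <;> simp
  have hdisj : Disjoint ((fun a => e (.inl a)) '' {a | w (e (.inl a)) = n})
      ((fun b => e (.inr b)) '' {b | w (e (.inr b)) = n}) := by
    rw [Set.disjoint_left]
    rintro _ ⟨a, -, rfl⟩ ⟨b, -, h⟩
    simp at h
  simp only [map_add, coeff_genSeries]
  rw [hfiber] at hfin ⊢
  rw [finsum_mem_union hdisj (hfin.subset Set.subset_union_left)
      (hfin.subset Set.subset_union_right),
    finsum_mem_image hl.injOn, finsum_mem_image hr.injOn]
  rfl

theorem X_mul_genSeries (w : α → ℕ) (c : α → R) :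
    X * genSeries w c = genSeries (fun a => w a + 1) c := by
  ext n
  cases n with
  | zero => rw [coeff_zero_X_mul, coeff_genSeries_eq_sum _ c 0 (s := ∅) (by simp), Finset.sum_empty]
  | succ n =>
    rw [coeff_succ_X_mul, coeff_genSeries, coeff_genSeries]
    congr! 3 with a
    simp

end Semiring

section CommSemiring

variable [CommSemiring R]

theorem X_mul_derivative_genSeries (w : α → ℕ) [TendstoCofinite w] (c : α → R) :
    X * derivative R (genSeries w c) = genSeries w fun a => w a * c a := by
  ext n
  have hX : coeff n (X * derivative R (genSeries w c)) = n * coeff n (genSeries w c) := by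
    cases n with
    | zero => simp
    | succ n => rw [coeff_succ_X_mul, coeff_derivative, mul_comm]; push_cast; rfl
  rw [hX, coeff_genSeries, coeff_genSeries, ← smul_eq_mul,
    smul_finsum_mem (TendstoCofinite.finite_preimage_singleton w n)]
  exact finsum_mem_congr rfl fun a ha => by rw [Set.mem_preimage.mp ha, smul_eq_mul]

theorem genSeries_mul_genSeries (w : α → ℕ) (v : β → ℕ) [TendstoCofinite w] [TendstoCofinite v]
    (c : α → R) (d : β → R) :
    genSeries w c * genSeries v d =
      genSeries (fun p : α × β => w p.1 + v p.2) fun p => c p.1 * d p.2 := by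
  ext n
  have := tendstoCofinite_add w v
  rw [coeff_mul, coeff_genSeries_eq_sum _ _ n fun p => mem_fiber,
    ← Finset.sum_fiberwise_of_maps_to (t := Finset.HasAntidiagonal.antidiagonal n)
      (g := fun p : α × β => (w p.1, v p.2)) fun p hp => by simpa using hp]
  refine Finset.sum_congr rfl fun ⟨i, j⟩ hij => ?_
  have hprod : {p ∈ fiber (fun p : α × β => w p.1 + v p.2) n | (w p.1, v p.2) = (i, j)} =
      fiber w i ×ˢ fiber v j := by
    ext p
    have := Finset.HasAntidiagonal.mem_antidiagonal.mp hij
    grind [mem_fiber]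
  rw [hprod, coeff_genSeries_eq_sum _ _ i fun a => mem_fiber,
    coeff_genSeries_eq_sum _ _ j fun b => mem_fiber, Finset.sum_mul_sum, Finset.sum_product]

end CommSemiring

theorem expand_genSeries [CommRing R] (p : ℕ) (hp : p ≠ 0) (w : α → ℕ) (c : α → R) :
    expand p hp (genSeries w c) = genSeries (fun a => p * w a) c := by
  ext n
  by_cases hn : p ∣ n
  · obtain ⟨m, rfl⟩ := hn
    rw [coeff_expand_mul, coeff_genSeries, coeff_genSeries]
    congr! 3 with a
    simp [hp]
  · rw [coeff_expand_of_not_dvd _ _ _ hn,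
      coeff_genSeries_eq_sum _ c n (s := ∅) fun a => by
        simpa using fun h : p * w a = n => hn (h ▸ dvd_mul_right p (w a)),
      Finset.sum_empty]

end GeneratingSeries

/-! ### Uniqueness for functional and differential equations of power series -/

theorem eq_C_of_expand_eq {R : Type*} [CommRing R] {p : ℕ} (hp : 1 < p) {f : R⟦X⟧}
    (hf : expand p (by lia) f = f) : f = C (constantCoeff f) := by
  ext n
  induction n using Nat.strong_induction_on with
  | _ n ih =>
    by_cases hn : p ∣ n
    · obtain ⟨m, rfl⟩ := hn
      rcases m.eq_zero_or_pos with rfl | hm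
      · simp
      · rw [← hf, coeff_expand_mul, ih m (lt_mul_left hm hp), hf, coeff_C, coeff_C,
          if_neg hm.ne', if_neg (by positivity)]
    · rw [← hf, coeff_expand_of_not_dvd _ _ _ hn, hf, coeff_C,
        if_neg fun h : n = 0 => hn (h ▸ dvd_zero p)]

theorem pow_eq_of_mul_derivative_eq {K : Type*} [Field K] [CharZero K] {f g : K⟦X⟧} {n : ℕ}
    (hf : constantCoeff f ≠ 0) (hfg : constantCoeff g = constantCoeff f ^ n)
    (h : f * derivative K g = n * (derivative K f * g)) : f ^ n = g := by
  have hinv : f * f⁻¹ = 1 := PowerSeries.mul_inv_cancel f hf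
  have hquot : g * f⁻¹ ^ n = 1 := by
    apply derivative.ext
    · have hg : derivative K g = n * (derivative K f * g) * f⁻¹ := by
        linear_combination f⁻¹ * h - derivative K g * hinv
      rw [Derivation.leibniz, derivative_pow, derivative_inv', derivative_one, hg]
      cases n with
      | zero => simp
      | succ n =>
        simp only [smul_eq_mul, Nat.add_sub_cancel]
        ring
    · simp [hfg, hf]
  calc f ^ n = f ^ n * (g * f⁻¹ ^ n) := by rw [hquot, mul_one]
    _ = g * (f * f⁻¹) ^ n := by ring
    _ = g := by rw [hinv, one_pow, mul_one]

/-! ### Heath-Brown's involutions -/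

theorem sum_eq_zero_of_involution {ι M : Type*} [AddCommGroup M] [IsAddTorsionFree M]
    {s : Finset ι} {f : ι → M} (g : ι → ι) (g_mem : ∀ a ∈ s, g a ∈ s)
    (g_invol : ∀ a ∈ s, g (g a) = a) (hf : ∀ a ∈ s, f (g a) = -f a) : ∑ a ∈ s, f a = 0 := by
  refine Finset.sum_involution (fun a _ => g a) (fun a ha => by rw [hf a ha, add_neg_cancel])
    (fun a ha hne hfix => hne ?_) g_mem g_invol
  have := hf a ha
  rw [hfix] at this
  exact self_eq_neg.mp this

/-- A set of integral triples `(x, y, z)` stable under the three maps with which Heath-Brown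
studies the solutions of `4xy + z² = N`. The third map acts only where `x - y + z > 0`, and the
plane `x - y + z = 0` is excluded. -/
structure IsHeathBrownStable (S : Finset (ℤ × ℤ × ℤ)) : Prop where
  fst_pos : ∀ {x y z}, (x, y, z) ∈ S → 0 < x
  neg_mem : ∀ {x y z}, (x, y, z) ∈ S → (x, y, -z) ∈ S
  swap_mem : ∀ {x y z}, (x, y, z) ∈ S → (y, x, -z) ∈ S
  shear_mem : ∀ {x y z}, (x, y, z) ∈ S → 0 < x - y + z → (x - y + z, y, 2 * y - z) ∈ S
  ne_zero : ∀ {x y z}, (x, y, z) ∈ S → x - y + z ≠ 0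

namespace IsHeathBrownStable

variable {S : Finset (ℤ × ℤ × ℤ)}

theorem sum_sq_mul_eq_zero (hS : IsHeathBrownStable S) : ∑ t ∈ S, t.1 ^ 2 * t.2.2 = 0 :=
  sum_eq_zero_of_involution (fun t => (t.1, t.2.1, -t.2.2)) (fun _ ht => hS.neg_mem ht)
    (fun _ _ => by simp) fun _ _ => by simp

theorem sum_filter_pos_eq_zero (hS : IsHeathBrownStable S) :
    ∑ t ∈ S with 0 < t.1 - t.2.1 + t.2.2, (t.1 + t.2.1) * (t.1 + t.2.2) * (t.2.1 - t.2.2) = 0 := by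
  refine sum_eq_zero_of_involution (fun t => (t.1 - t.2.1 + t.2.2, t.2.1, 2 * t.2.1 - t.2.2))
    (fun t ht => ?_) (fun _ _ => ?_) fun _ _ => by ring
  · obtain ⟨ht, hpos⟩ := Finset.mem_filter.mp ht
    exact Finset.mem_filter.mpr ⟨hS.shear_mem ht hpos, by linarith [hS.fst_pos ht]⟩
  · ext <;> ring

theorem sum_filter_not_pos {M : Type*} [AddCommMonoid M] (hS : IsHeathBrownStable S)
    (f : ℤ × ℤ × ℤ → M) :
    ∑ t ∈ S with ¬ 0 < t.1 - t.2.1 + t.2.2, f t =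
      ∑ t ∈ S with 0 < t.1 - t.2.1 + t.2.2, f (t.2.1, t.1, -t.2.2) := by
  refine Finset.sum_nbij' (fun t => (t.2.1, t.1, -t.2.2)) (fun t => (t.2.1, t.1, -t.2.2))
    ?_ ?_ (fun _ _ => by simp) (fun _ _ => by simp) fun _ _ => by simp
  all_goals
    rintro ⟨x, y, z⟩ ht
    rw [Finset.mem_filter] at ht ⊢
    have := hS.ne_zero ht.1
    exact ⟨hS.swap_mem ht.1, by dsimp only at *; lia⟩

theorem sum_mul_sub_sq_eq_zero (hS : IsHeathBrownStable S) :
    ∑ t ∈ S, t.1 * (t.1 * t.2.1 - t.2.2 ^ 2) = 0 := by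
  -- After this correction, the summand plus its image under the swap is odd under the shear.
  calc ∑ t ∈ S, t.1 * (t.1 * t.2.1 - t.2.2 ^ 2)
      = ∑ t ∈ S, (t.1 * (t.1 * t.2.1 - t.2.2 ^ 2) - t.1 ^ 2 * t.2.2) := by
        rw [Finset.sum_sub_distrib, hS.sum_sq_mul_eq_zero, sub_zero]
    _ = ∑ t ∈ S with 0 < t.1 - t.2.1 + t.2.2,
          (t.1 + t.2.1) * (t.1 + t.2.2) * (t.2.1 - t.2.2) := by
        rw [← Finset.sum_filter_add_sum_filter_not S fun t => 0 < t.1 - t.2.1 + t.2.2,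
          hS.sum_filter_not_pos, ← Finset.sum_add_distrib]
        exact Finset.sum_congr rfl fun _ _ => by ring
    _ = 0 := hS.sum_filter_pos_eq_zero

end IsHeathBrownStable

/-! ### Theta series and their duplication formulas -/

instance tendstoCofinite_natAbs_sq : TendstoCofinite fun x : ℤ => x.natAbs ^ 2 := by
  refine (Filter.tendstoCofinite_iff_finite_preimage_singleton _).mpr fun n =>
    (Set.finite_Icc (-n : ℤ) n).subset ?_
  rintro x rfl
  have := Nat.le_self_pow two_ne_zero x.natAbs
  rw [Set.mem_Icc]
  lia

theorem theta3Q_eq_genSeries : theta3Q = genSeries (fun x : ℤ => x.natAbs ^ 2) 1 := by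
  have hsplit : genSeries (fun x : ℤ => x.natAbs ^ 2) (1 : ℤ → ℚ) =
      genSeries (fun j : ℕ => j ^ 2) 1 + genSeries (fun j : ℕ => (j + 1) ^ 2) 1 :=
    genSeries_eq_add_of_sum_equiv Equiv.intEquivNatSumNat.symm _ _
  rw [hsplit, genSeries_one_of_injective fun i j h => by simpa using h,
    genSeries_one_of_injective fun i j h => by simpa using h]
  ext k
  have hpos : (∃ j : ℕ, 1 ≤ j ∧ j ^ 2 = k) ↔ ∃ j : ℕ, (j + 1) ^ 2 = k :=
    ⟨fun ⟨j, hj, h⟩ => ⟨j - 1, by rwa [Nat.sub_add_cancel hj]⟩,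
      fun ⟨j, h⟩ => ⟨j + 1, by lia, h⟩⟩
  have hall : (∃ j : ℕ, j ^ 2 = k) ↔ k = 0 ∨ ∃ j : ℕ, (j + 1) ^ 2 = k := by
    rw [← Nat.or_exists_add_one]
    simp [eq_comm]
  have hzero : k = 0 → ¬ ∃ j : ℕ, (j + 1) ^ 2 = k := by
    rintro rfl
    simp
  simp only [theta3Q, map_add, coeff_mk, hpos, hall]
  split_ifs <;> first | tauto | norm_num

theorem constantCoeff_theta3Q : constantCoeff theta3Q = 1 := by
  rw [← coeff_zero_eq_constantCoeff_apply, theta3Q, coeff_mk, if_pos rfl]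

/-- The exponent `k(k+1)` of the terms of `θ₂`, as a natural number. -/
def pronic (k : ℤ) : ℕ :=
  (k * (k + 1)).toNat

theorem natCast_pronic (k : ℤ) : (pronic k : ℤ) = k * (k + 1) :=
  Int.toNat_of_nonneg (by rcases lt_or_ge k 0 with hk | hk <;> nlinarith)

instance tendstoCofinite_pronic : TendstoCofinite pronic := by
  refine (Filter.tendstoCofinite_iff_finite_preimage_singleton _).mpr fun n =>
    (Set.finite_Icc (-n - 1 : ℤ) n).subset ?_
  rintro k rfl
  rw [Set.mem_Icc, natCast_pronic]
  constructor <;> nlinarith [Int.le_self_sq k, Int.le_self_sq (-(k + 1))]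

/-- The integral part `∑_{k ∈ ℤ} q^{k(k+1)}` of `θ₂(q²)`, that is, `θ₂(q²)` divided by
`q^{1/4}`. -/
noncomputable def theta2Q : ℚ⟦X⟧ :=
  genSeries pronic 1

theorem theta2Q_eq_two_smul :
    theta2Q = (2 : ℚ) •
      PowerSeries.mk fun k => if ∃ j : ℕ, j * (j + 1) = k then (1 : ℚ) else 0 := by
  have hinj : Function.Injective fun j : ℕ => j * (j + 1) :=
    StrictMono.injective fun i j h => by gcongr
  have hinr : (fun j : ℕ => pronic (Int.negSucc j)) = fun j => j * (j + 1) := by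
    ext j
    zify
    rw [natCast_pronic, Int.negSucc_eq]
    ring
  calc theta2Q
      = genSeries (fun j : ℕ => pronic j) 1 + genSeries (fun j : ℕ => pronic (Int.negSucc j)) 1 :=
        genSeries_eq_add_of_sum_equiv Equiv.intEquivNatSumNat.symm pronic 1
    _ = (2 : ℚ) • genSeries (fun j : ℕ => j * (j + 1)) 1 := by
        rw [hinr, two_smul]
        rfl
    _ = _ := by rw [genSeries_one_of_injective hinj]

theorem theta2Q4_eq_X_mul : theta2Q4 = X * theta2Q ^ 4 := by
  rw [theta2Q4, theta2Q_eq_two_smul, smul_pow, mul_smul_comm]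
  norm_num

/-- The partition of the lattice `ℤ²` into the sublattice where `x + y` is even and its coset,
both coordinatized by a rotation by 45°. -/
def latticeRotation : (ℤ × ℤ) ⊕ (ℤ × ℤ) ≃ ℤ × ℤ where
  toFun := Sum.elim (fun p => (p.1 + p.2, p.1 - p.2)) fun p => (p.1 + p.2 + 1, p.1 - p.2)
  invFun p :=
    if (p.1 + p.2) % 2 = 0 then .inl ((p.1 + p.2) / 2, (p.1 - p.2) / 2)
    else .inr ((p.1 + p.2) / 2, (p.1 - p.2) / 2)
  left_inv := by
    rintro (⟨u, v⟩ | ⟨u, v⟩)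
    · have heven : (u + v + (u - v)) % 2 = 0 := by lia
      simp only [Sum.elim_inl, heven, if_true]
      congr 2 <;> lia
    · have hodd : (u + v + 1 + (u - v)) % 2 ≠ 0 := by lia
      simp only [Sum.elim_inr, hodd, if_false]
      congr 2 <;> lia
  right_inv := by
    rintro ⟨x, y⟩
    dsimp only
    split_ifs with h <;> ext <;> dsimp <;> lia

@[simp]
theorem latticeRotation_inl (p : ℤ × ℤ) :
    latticeRotation (.inl p) = (p.1 + p.2, p.1 - p.2) := rfl

@[simp]
theorem latticeRotation_inr (p : ℤ × ℤ) :
    latticeRotation (.inr p) = (p.1 + p.2 + 1, p.1 - p.2) := rfl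

theorem theta3Q_sq :
    theta3Q ^ 2 = expand 2 two_ne_zero (theta3Q ^ 2) + X * expand 2 two_ne_zero (theta2Q ^ 2) := by
  have := tendstoCofinite_add (fun x : ℤ => x.natAbs ^ 2) (fun x : ℤ => x.natAbs ^ 2)
  simp only [theta2Q, theta3Q_eq_genSeries, sq (genSeries _ _), genSeries_mul_genSeries,
    expand_genSeries, X_mul_genSeries]
  rw [genSeries_eq_add_of_sum_equiv latticeRotation
    fun p : ℤ × ℤ => p.1.natAbs ^ 2 + p.2.natAbs ^ 2]
  congr! 3 with p p
  · rw [latticeRotation_inl]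
    zify
    simp only [sq_abs]
    ring
  · rw [latticeRotation_inr]
    zify
    simp only [sq_abs, natCast_pronic]
    ring

theorem theta2Q_sq : theta2Q ^ 2 = 2 * expand 2 two_ne_zero (theta3Q * theta2Q) := by
  have := tendstoCofinite_add pronic pronic
  rw [two_mul]
  simp only [theta2Q, theta3Q_eq_genSeries, sq (genSeries _ _), genSeries_mul_genSeries,
    expand_genSeries]
  rw [genSeries_eq_add_of_sum_equiv latticeRotation fun p : ℤ × ℤ => pronic p.1 + pronic p.2]
  congr 1
  · refine .trans ?_ (genSeries_comp_equiv (Equiv.prodComm ℤ ℤ) _ _)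
    congr! 2 with p
    rw [latticeRotation_inl, Function.comp_apply, Equiv.prodComm_apply, Prod.fst_swap,
      Prod.snd_swap]
    zify
    simp only [sq_abs, natCast_pronic]
    ring
  · refine .trans ?_ (genSeries_comp_equiv ((Equiv.addRight 1).prodCongr (Equiv.refl ℤ)) _ _)
    congr! 2 with p
    simp only [latticeRotation_inr, Function.comp_apply, Equiv.prodCongr_apply, Prod.map_fst,
      Prod.map_snd, Equiv.coe_addRight, Equiv.refl_apply]
    zify
    simp only [sq_abs, natCast_pronic]
    ring

/-! ### The fourth power of `∑ q^{k(k+1)}` -/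

/-- The exponent `(2s + 1)(2t + 1) - 1`, in a form without subtraction. -/
def oddProductPred (p : ℕ × ℕ) : ℕ :=
  2 * (2 * p.1 * p.2 + p.1 + p.2)

instance tendstoCofinite_oddProductPred : TendstoCofinite oddProductPred := by
  refine (Filter.tendstoCofinite_iff_finite_preimage_singleton _).mpr fun n =>
    ((Set.finite_Iic n).prod (Set.finite_Iic n)).subset ?_
  rintro ⟨s, t⟩ rfl
  simp only [oddProductPred, Set.mem_prod, Set.mem_Iic]
  constructor <;> nlinarith

instance tendstoCofinite_pronic_add_oddProductPred :
    TendstoCofinite fun p : ℤ × ℕ × ℕ => pronic p.1 + oddProductPred p.2 :=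
  tendstoCofinite_add pronic oddProductPred

/-- The series `∑ d q^{de - 1}` over all pairs of odd positive integers `d = 2s + 1` and
`e = 2t + 1`, which turns out to be `(∑_{j ≥ 0} q^{j(j+1)})⁴`. -/
noncomputable def oddDivisorPairSeries : ℚ⟦X⟧ :=
  genSeries oddProductPred fun p => 2 * p.1 + 1

/-- The odd triple `(2s + 1, 2t + 1, 2k + 1)` encoded by `(k, s, t)`. -/
def oddTriple : ℤ × ℕ × ℕ ↪ ℤ × ℤ × ℤ where
  toFun p := (2 * p.2.1 + 1, 2 * p.2.2 + 1, 2 * p.1 + 1)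
  inj' := by
    rintro ⟨k, s, t⟩ ⟨k', s', t'⟩ h
    simpa [and_assoc, and_comm, and_left_comm] using h

theorem oddTriple_apply (p : ℤ × ℕ × ℕ) :
    oddTriple p = (2 * (p.2.1 : ℤ) + 1, 2 * (p.2.2 : ℤ) + 1, 2 * p.1 + 1) := rfl

/-- The solutions of `4xy + z² = 4m + 5` in odd integers with `x` and `y` positive. -/
noncomputable def oddTriples (m : ℕ) : Finset (ℤ × ℤ × ℤ) :=
  (fiber (fun p : ℤ × ℕ × ℕ => pronic p.1 + oddProductPred p.2) m).map oddTriple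

theorem mem_oddTriples {m : ℕ} {x y z : ℤ} :
    (x, y, z) ∈ oddTriples m ↔
      0 < x ∧ 0 < y ∧ Odd x ∧ Odd y ∧ Odd z ∧ 4 * (x * y) + z ^ 2 = 4 * m + 5 := by
  rw [oddTriples, Finset.mem_map]
  constructor
  · rintro ⟨⟨k, s, t⟩, hm, h⟩
    obtain ⟨rfl, rfl, rfl⟩ : 2 * (s : ℤ) + 1 = x ∧ 2 * (t : ℤ) + 1 = y ∧ 2 * k + 1 = z := by
      simpa [oddTriple_apply] using h
    rw [mem_fiber] at hm
    zify [oddProductPred] at hm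
    rw [natCast_pronic] at hm
    refine ⟨by lia, by lia, ⟨s, rfl⟩, ⟨t, rfl⟩, ⟨k, rfl⟩, ?_⟩
    linear_combination 4 * hm
  · rintro ⟨hx, hy, ⟨s, rfl⟩, ⟨t, rfl⟩, ⟨k, rfl⟩, h⟩
    lift s to ℕ using by lia
    lift t to ℕ using by lia
    refine ⟨(k, s, t), ?_, rfl⟩
    rw [mem_fiber]
    zify [oddProductPred]
    rw [natCast_pronic]
    linarith

theorem isHeathBrownStable_oddTriples (m : ℕ) : IsHeathBrownStable (oddTriples m) where
  fst_pos h := (mem_oddTriples.mp h).1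
  neg_mem h := by
    obtain ⟨hx, hy, hxo, hyo, hzo, heq⟩ := mem_oddTriples.mp h
    exact mem_oddTriples.mpr ⟨hx, hy, hxo, hyo, hzo.neg, by rwa [neg_sq]⟩
  swap_mem h := by
    obtain ⟨hx, hy, hxo, hyo, hzo, heq⟩ := mem_oddTriples.mp h
    exact mem_oddTriples.mpr ⟨hy, hx, hyo, hxo, hzo.neg, by linear_combination heq⟩
  shear_mem h hpos := by
    obtain ⟨-, hy, hxo, hyo, hzo, heq⟩ := mem_oddTriples.mp h
    exact mem_oddTriples.mpr ⟨hpos, hy, (hxo.sub_odd hyo).add_odd hzo, hyo,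
      (even_two_mul _).sub_odd hzo, by linear_combination heq⟩
  ne_zero h := by
    obtain ⟨-, -, hxo, hyo, hzo, -⟩ := mem_oddTriples.mp h
    intro h0
    exact absurd ((hxo.sub_odd hyo).add_odd hzo) (by simp [h0])

theorem sum_fiber_pronic_add_oddProductPred_eq_zero (m : ℕ) :
    ∑ p ∈ fiber (fun p : ℤ × ℕ × ℕ => pronic p.1 + oddProductPred p.2) m,
      (2 * p.2.1 + 1 : ℤ) * (oddProductPred p.2 - 4 * pronic p.1) = 0 := by
  rw [← (isHeathBrownStable_oddTriples m).sum_mul_sub_sq_eq_zero, oddTriples, Finset.sum_map]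
  refine Finset.sum_congr rfl fun p _ => ?_
  simp only [oddTriple_apply, oddProductPred, natCast_pronic]
  push_cast
  ring

theorem theta2Q_mul_derivative_oddDivisorPairSeries :
    theta2Q * derivative ℚ oddDivisorPairSeries =
      4 * (derivative ℚ theta2Q * oddDivisorPairSeries) := by
  have hleft : (X : ℚ⟦X⟧) * (theta2Q * derivative ℚ oddDivisorPairSeries) =
      genSeries (fun p : ℤ × ℕ × ℕ => pronic p.1 + oddProductPred p.2)
        fun p => (oddProductPred p.2 * (2 * p.2.1 + 1) : ℚ) := by
    rw [mul_left_comm, oddDivisorPairSeries, X_mul_derivative_genSeries, theta2Q,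
      genSeries_mul_genSeries]
    simp
  have hright : (X : ℚ⟦X⟧) * (derivative ℚ theta2Q * oddDivisorPairSeries) =
      genSeries (fun p : ℤ × ℕ × ℕ => pronic p.1 + oddProductPred p.2)
        fun p => (pronic p.1 * (2 * p.2.1 + 1) : ℚ) := by
    rw [← mul_assoc, oddDivisorPairSeries, theta2Q, X_mul_derivative_genSeries,
      genSeries_mul_genSeries]
    simp
  refine mul_left_cancel₀ X_ne_zero ?_
  rw [mul_left_comm X 4, hleft, hright]
  ext m
  have hfour : (4 : ℚ⟦X⟧) = C 4 := rfl
  rw [hfour, coeff_C_mul, coeff_genSeries_eq_sum _ _ m fun p => mem_fiber,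
    coeff_genSeries_eq_sum _ _ m fun p => mem_fiber, ← sub_eq_zero, Finset.mul_sum,
    ← Finset.sum_sub_distrib]
  have h := congrArg (Int.cast : ℤ → ℚ) (sum_fiber_pronic_add_oddProductPred_eq_zero m)
  push_cast at h
  rw [← h]
  exact Finset.sum_congr rfl fun p _ => by ring

theorem constantCoeff_theta2Q : constantCoeff theta2Q = 2 := by
  simp [theta2Q_eq_two_smul, ← coeff_zero_eq_constantCoeff_apply]

theorem constantCoeff_oddDivisorPairSeries : constantCoeff oddDivisorPairSeries = 1 := by
  rw [← coeff_zero_eq_constantCoeff_apply, oddDivisorPairSeries,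
    coeff_genSeries_eq_sum _ _ 0 (s := {(0, 0)}) fun p => ?_]
  · simp
  · rcases p with ⟨s, t⟩
    simp only [Finset.mem_singleton, Prod.mk.injEq, oddProductPred]
    lia

theorem theta2Q_pow_four : theta2Q ^ 4 = 16 * oddDivisorPairSeries := by
  have hsixteen : (16 : ℚ⟦X⟧) = C 16 := rfl
  refine pow_eq_of_mul_derivative_eq ?_ ?_ ?_
  · rw [constantCoeff_theta2Q]
    norm_num
  · rw [hsixteen, map_mul, constantCoeff_C, constantCoeff_theta2Q,
      constantCoeff_oddDivisorPairSeries]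
    norm_num
  · rw [hsixteen, Derivation.leibniz, derivative_C]
    simp only [smul_eq_mul]
    push_cast
    linear_combination C 16 * theta2Q_mul_derivative_oddDivisorPairSeries

/-! ### The odd divisor series -/

/-- The exponent `(2s + 1)(e + 1)` of the divisor series; the shifts make every factor positive. -/
def oddMulExponent (p : ℕ × ℕ) : ℕ :=
  (2 * p.1 + 1) * (p.2 + 1)

instance tendstoCofinite_oddMulExponent : TendstoCofinite oddMulExponent := by
  refine (Filter.tendstoCofinite_iff_finite_preimage_singleton _).mpr fun n =>
    ((Set.finite_Iic n).prod (Set.finite_Iic n)).subset ?_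
  rintro ⟨s, e⟩ rfl
  simp only [oddMulExponent, Set.mem_prod, Set.mem_Iic]
  constructor <;> nlinarith

/-- The generating series `∑_{n ≥ 1} σ°(n) q^n` of the odd divisor function, as the sum of
`d q^{de}` over `d = 2s + 1` odd and `e` positive. -/
noncomputable def oddDivisorSeries : ℚ⟦X⟧ :=
  genSeries oddMulExponent fun p => 2 * p.1 + 1

theorem coeff_oddDivisorSeries {n : ℕ} (hn : n ≠ 0) :
    coeff n oddDivisorSeries = ∑ d ∈ n.divisors with Odd d, (d : ℚ) := by
  rw [oddDivisorSeries, coeff_genSeries_eq_sum _ _ n fun p => mem_fiber]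
  refine Finset.sum_nbij' (fun p => 2 * p.1 + 1) (fun d => (d / 2, n / d - 1)) ?_ ?_ ?_ ?_ ?_
  · rintro ⟨s, e⟩ h
    rw [mem_fiber] at h
    exact Finset.mem_filter.mpr ⟨Nat.mem_divisors.mpr ⟨⟨e + 1, h.symm⟩, hn⟩, ⟨s, rfl⟩⟩
  · intro d hd
    obtain ⟨hdn, s, rfl⟩ := Finset.mem_filter.mp hd
    obtain ⟨⟨e, rfl⟩, -⟩ := Nat.mem_divisors.mp hdn
    have he : 0 < e := Nat.pos_of_ne_zero (right_ne_zero_of_mul hn)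
    rw [mem_fiber, oddMulExponent, Nat.mul_div_cancel_left _ (by lia), Nat.sub_add_cancel he]
    congr 2
    lia
  · rintro ⟨s, e⟩ h
    rw [mem_fiber] at h
    rw [← h, oddMulExponent]
    simp only [Nat.mul_div_cancel_left _ (Nat.succ_pos _)]
    ext <;> lia
  · intro d hd
    obtain ⟨-, s, rfl⟩ := Finset.mem_filter.mp hd
    lia
  · intros
    push_cast
    rfl

theorem constantCoeff_oddDivisorSeries : constantCoeff oddDivisorSeries = 0 := by
  rw [← coeff_zero_eq_constantCoeff_apply, oddDivisorSeries,
    coeff_genSeries_eq_sum _ _ 0 (s := ∅) fun p => by simp [oddMulExponent],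
    Finset.sum_empty]

theorem oddDivisorSeries_eq_add_expand :
    oddDivisorSeries = X * oddDivisorPairSeries + expand 2 two_ne_zero oddDivisorSeries := by
  let evenOdd : (ℕ × ℕ) ⊕ (ℕ × ℕ) ≃ ℕ × ℕ :=
    (Equiv.prodSumDistrib ℕ ℕ ℕ).symm.trans ((Equiv.refl ℕ).prodCongr Equiv.natSumNatEquivNat)
  conv_lhs => rw [oddDivisorSeries, genSeries_eq_add_of_sum_equiv evenOdd]
  rw [oddDivisorPairSeries, oddDivisorSeries, X_mul_genSeries, expand_genSeries]
  congr 1 <;> congr! 2 with p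
  · change (2 * p.1 + 1) * (2 * p.2 + 1) = 2 * (2 * p.1 * p.2 + p.1 + p.2) + 1
    ring
  · change (2 * p.1 + 1) * (2 * p.2 + 1 + 1) = 2 * ((2 * p.1 + 1) * (p.2 + 1))
    ring

theorem theta3Q_pow_four_add_theta2Q4_eq_add_expand :
    theta3Q ^ 4 + theta2Q4 =
      24 * (X * oddDivisorPairSeries) + expand 2 two_ne_zero (theta3Q ^ 4 + theta2Q4) := by
  have h3 := theta3Q_sq
  have h2 := theta2Q_sq
  rw [theta2Q4_eq_X_mul]
  simp only [map_add, map_mul, map_pow, expand_X] at h3 h2 ⊢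
  set a := expand 2 two_ne_zero theta3Q
  set b := expand 2 two_ne_zero theta2Q
  have := algebraRat.charZero ℚ⟦X⟧
  refine mul_left_cancel₀ (two_ne_zero' ℚ⟦X⟧) ?_
  linear_combination 2 * (theta3Q ^ 2 + a ^ 2 + X * b ^ 2) * h3 -
    X * (theta2Q ^ 2 + 2 * a * b) * h2 + 3 * X * theta2Q_pow_four

theorem theta3Q_pow_four_add_theta2Q4_eq : theta3Q ^ 4 + theta2Q4 = 1 + 24 * oddDivisorSeries := by
  have hfix : expand 2 two_ne_zero (theta3Q ^ 4 + theta2Q4 - 24 * oddDivisorSeries) =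
      theta3Q ^ 4 + theta2Q4 - 24 * oddDivisorSeries := by
    have h24 : expand 2 two_ne_zero (24 : ℚ⟦X⟧) = 24 := map_ofNat _ 24
    rw [map_sub, map_mul, h24]
    linear_combination 24 * oddDivisorSeries_eq_add_expand -
      theta3Q_pow_four_add_theta2Q4_eq_add_expand
  have hconst : constantCoeff (theta3Q ^ 4 + theta2Q4 - 24 * oddDivisorSeries) = 1 := by
    rw [map_sub, map_mul, constantCoeff_oddDivisorSeries, theta2Q4_eq_X_mul]
    simp [constantCoeff_theta3Q]
  have h := eq_C_of_expand_eq one_lt_two hfix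
  rw [hconst, map_one] at h
  linear_combination h

/-- The generating function of the odd divisor function:
`1/24 + ∑_{k ≥ 1} σ°(k) q^k = (1/24)(θ₃⁴(q²) + θ₂⁴(q²))`. -/
theorem odd_divisor_generating_function :
    (PowerSeries.mk fun k => if k = 0 then (1 / 24 : ℚ)
        else ((∑ d ∈ k.divisors.filter (fun d => Odd d), d : ℕ) : ℚ)) =
      (1 / 24 : ℚ) • (theta3Q ^ 4 + theta2Q4) := by
  have h24 : (24 : ℚ⟦X⟧) = C 24 := rfl
  ext k
  rw [theta3Q_pow_four_add_theta2Q4_eq, h24, coeff_mk, coeff_smul, map_add, coeff_C_mul, coeff_one]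
  split_ifs with hk
  · subst hk
    rw [coeff_zero_eq_constantCoeff_apply, constantCoeff_oddDivisorSeries]
    norm_num
  · rw [coeff_oddDivisorSeries hk]
    push_cast
    ring
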